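/- Let (V, Fil_i^•) be a semistable multi-filtered K-vector space with integral model M, and let B̄ ⊆ M̄ be a nonzero subspace with μ(B̄) > μ(M̄) (slopes taken with respect to the induced filtrations). Then the short exact sequence 0 → B̄ → M̄ → M̄/B̄ → 0 is not liftable over O: there is no short exact sequence of O-modules 0 → B → M → G → 0 with G flat over O, reducing modulo 𝔪 to the given sequence, and such that for all i, j the submodule Fil_i^j ∩ B surjects onto Fil̄_i^j ∩ B̄. -/

import Mathlib

/-!
The theorem follows from one dimension count. For a `K`-subspace `U ⊆ V`, the lattice
`N = U ∩ M` is saturated in `M`, so `M/N` is finite and torsion-free over the valuation ring `O`,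
hence free. Thus `N` is a direct summand of `M`, it is free of rank `dim_K U`, and its image in
`M̄` has dimension `rank_O N = dim_K U` (`finrank_span_redMap_comap`).

The weight of a filtration depends only on the dimensions of its steps (`filWeight_eq`), so
`μ(M̄) = μ(V)`. Suppose a lift `B` exists. Flatness of `M/B` gives `B = W ∩ M` for the `K`-span
`W` of `B` (`comap_span_eq_of_flat`), so `Fil_i^j ∩ B = (Fil_i^j ∩ W) ∩ M`. As `Fil_i^j ∩ B`
surjects onto `Fil̄_i^j ∩ B̄`, the dimension count gives `μ(B̄) = μ(W)`, and semistability yields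
`μ(B̄) = μ(W) ≤ μ(V) = μ(M̄)`.
-/


open Module Submodule

section FilteredDefs

variable (F : Type*) [CommRing F] {V : Type*} [AddCommGroup V] [Module F V] {s : ℕ}

/-- The weight of a multi-filtered space: `w = Σ_i Σ_j j · dim (Fil_i^j / Fil_i^{j+1})`
(the filtrations are assumed to vanish at step `l`). -/
noncomputable def filWeight (Fil : Fin s → ℕ → Submodule F V) (l : ℕ) : ℕ :=
  ∑ i : Fin s, ∑ j ∈ Finset.range (l + 1),
    j * Module.finrank F ((Fil i j) ⧸ (Submodule.comap (Fil i j).subtype (Fil i (j + 1))))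

/-- The slope `μ = w / dim`. -/
noncomputable def filSlope (Fil : Fin s → ℕ → Submodule F V) (l : ℕ) : ℚ :=
  (filWeight F Fil l : ℚ) / (Module.finrank F V : ℚ)

/-- The filtrations induced on a subspace `W ⊆ V`. -/
def inducedFil (Fil : Fin s → ℕ → Submodule F V) (W : Submodule F V) :
    Fin s → ℕ → Submodule F W := fun i j => (Fil i j).comap W.subtype

/-- Semistability: every nonzero subspace, with the induced filtrations, has slope at most
that of the whole space. -/
def Semistable (Fil : Fin s → ℕ → Submodule F V) (l : ℕ) : Prop :=
  ∀ W : Submodule F V, W ≠ ⊥ →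
    filSlope F (inducedFil F Fil W) l ≤ filSlope F Fil l

end FilteredDefs

section Models

variable (O : Type*) [CommRing O] [IsDomain O] [ValuationRing O]
variable (K : Type*) [Field K] [Algebra O K] [IsFractionRing O K]
variable {V : Type*} [AddCommGroup V] [Module K V] [Module O V] [IsScalarTower O K V]
variable {s : ℕ}

/-- An integral model: a finite free `O`-submodule of `V` spanning `V` over `K`. -/
def IsIntegralModel (M : Submodule O V) : Prop :=
  Module.Finite O M ∧ Module.Free O M ∧ Submodule.span K (M : Set V) = ⊤

/-- The filtration induced on an integral model `M`: `Fil_i^j ∩ M`. -/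
def filM (Fil : Fin s → ℕ → Submodule K V) (M : Submodule O V) :
    Fin s → ℕ → Submodule O M :=
  fun i j => ((Fil i j).restrictScalars O).comap M.subtype

/-- The reduction `M̄ = M ⊗_O k = M / 𝔪M`. -/
abbrev Mbar (M : Submodule O V) : Type _ :=
  M ⧸ ((IsLocalRing.maximalIdeal O) • ⊤ : Submodule O M)

noncomputable instance (M : Submodule O V) :
    Module (IsLocalRing.ResidueField O) (Mbar O M) :=
  inferInstanceAs (Module (O ⧸ IsLocalRing.maximalIdeal O)
    (M ⧸ ((IsLocalRing.maximalIdeal O) • ⊤ : Submodule O M)))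

instance (M : Submodule O V) :
    IsScalarTower O (IsLocalRing.ResidueField O) (Mbar O M) :=
  inferInstanceAs (IsScalarTower O (O ⧸ IsLocalRing.maximalIdeal O)
    (M ⧸ ((IsLocalRing.maximalIdeal O) • ⊤ : Submodule O M)))

/-- The reduction map `M → M̄`. -/
noncomputable def redMap (M : Submodule O V) : M →ₗ[O] Mbar O M :=
  Submodule.mkQ _

/-- The induced filtration `Fil̄_i^j` on the reduction `M̄`: the image of `Fil_i^j ∩ M`. -/
noncomputable def filBar (Fil : Fin s → ℕ → Submodule K V) (M : Submodule O V) :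
    Fin s → ℕ → Submodule (IsLocalRing.ResidueField O) (Mbar O M) :=
  fun i j => Submodule.span _ (redMap O M '' (filM O K Fil M i j : Set M))

/-- The quotient ring `O/π`. -/
abbrev Oq (π : O) : Type _ := O ⧸ Ideal.span {π}

/-- The quotient `M̃ = M/πM`. -/
abbrev Mtil (M : Submodule O V) (π : O) : Type _ :=
  M ⧸ ((Ideal.span {π}) • ⊤ : Submodule O M)

/-- The reduction map `M → M̃`. -/
noncomputable def redMapTil (M : Submodule O V) (π : O) : M →ₗ[O] Mtil O M π :=
  Submodule.mkQ _

/-- The induced filtration `Fil̃_i^j` on `M̃`: the image of `Fil_i^j ∩ M`. -/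
noncomputable def filTil (Fil : Fin s → ℕ → Submodule K V) (M : Submodule O V) (π : O) :
    Fin s → ℕ → Submodule (Oq O π) (Mtil O M π) :=
  fun i j => Submodule.span _ (redMapTil O M π '' (filM O K Fil M i j : Set M))

/-- The natural map `M̃ = M/πM → M̄ = M/𝔪M` for `π ∈ 𝔪`. -/
noncomputable def thetaMap (M : Submodule O V) (π : O)
    (hπ : π ∈ IsLocalRing.maximalIdeal O) : Mtil O M π →ₗ[O] Mbar O M :=
  Submodule.mapQ _ _ LinearMap.id (by
    rw [Submodule.comap_id]
    exact Submodule.smul_mono (Ideal.span_le.mpr (by simpa using hπ)) le_rfl)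

/-- The short exact sequence `0 → B̄ → M̄ → Ḡ → 0` of `k`-vector spaces determined by a
subspace `B̄ ⊆ M̄` is liftable modulo `π ∈ 𝔪`: there is a short exact sequence
`0 → B̃ → M̃ → G̃ → 0` of `O/π`-modules with `G̃ = M̃/B̃` flat over `O/π`, reducing modulo `𝔪`
to the given sequence, and such that `Fil̃_i^j ∩ B̃` surjects onto `Fil̄_i^j ∩ B̄`. -/
def LiftableModulo (Fil : Fin s → ℕ → Submodule K V) (M : Submodule O V) (π : O)
    (hπ : π ∈ IsLocalRing.maximalIdeal O)
    (Bbar : Submodule (IsLocalRing.ResidueField O) (Mbar O M)) : Prop :=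
  ∃ Btil : Submodule (Oq O π) (Mtil O M π),
    Module.Flat (Oq O π) ((Mtil O M π) ⧸ Btil) ∧
    thetaMap O M π hπ '' (Btil : Set (Mtil O M π)) = (Bbar : Set (Mbar O M)) ∧
    ∀ i j, thetaMap O M π hπ ''
        ((filTil O K Fil M π i j ⊓ Btil : Submodule (Oq O π) (Mtil O M π)) : Set (Mtil O M π))
      = ((filBar O K Fil M i j ⊓ Bbar :
          Submodule (IsLocalRing.ResidueField O) (Mbar O M)) : Set (Mbar O M))

end Models

/-! ### Weights and dimensions -/

section Weights

variable {F : Type*} [Field F] {V : Type*} [AddCommGroup V] [Module F V] {s : ℕ}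

/-- For a decreasing filtration the graded pieces have dimension the difference of the dimensions
of consecutive steps. -/
theorem filWeight_eq [FiniteDimensional F V] (Fil : Fin s → ℕ → Submodule F V)
    (hdec : ∀ i, Antitone (Fil i)) (l : ℕ) :
    filWeight F Fil l = ∑ i : Fin s, ∑ j ∈ Finset.range (l + 1),
      j * (Module.finrank F (Fil i j) - Module.finrank F (Fil i (j + 1))) := by
  unfold filWeight
  refine Finset.sum_congr rfl fun i _ => Finset.sum_congr rfl fun j _ => ?_
  have h1 := Submodule.finrank_quotient_add_finrank
    (Submodule.comap (Fil i j).subtype (Fil i (j + 1)))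
  have h2 := (Submodule.comapSubtypeEquivOfLe (hdec i (Nat.le_succ j))).finrank_eq
  congr 1
  simp only [Nat.succ_eq_add_one] at h2
  omega

theorem antitone_inducedFil (Fil : Fin s → ℕ → Submodule F V) (hdec : ∀ i, Antitone (Fil i))
    (W : Submodule F V) (i : Fin s) : Antitone (inducedFil F Fil W i) :=
  fun _ _ h => Submodule.comap_mono (hdec i h)

theorem finrank_inducedFil (Fil : Fin s → ℕ → Submodule F V) (W : Submodule F V) (i : Fin s)
    (j : ℕ) : Module.finrank F (inducedFil F Fil W i j)
      = Module.finrank F (Fil i j ⊓ W : Submodule F V) := by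
  rw [← Submodule.finrank_map_subtype_eq W (inducedFil F Fil W i j), inducedFil,
    Submodule.map_comap_subtype, inf_comm]

/-- Slopes of decreasing filtrations agree as soon as the ambient spaces and all the steps have equal dimensions, even over
different fields. -/
theorem filSlope_congr [FiniteDimensional F V] {F' : Type*} [Field F'] {V' : Type*}
    [AddCommGroup V'] [Module F' V'] [FiniteDimensional F' V'] (Fil : Fin s → ℕ → Submodule F V)
    (hdec : ∀ i, Antitone (Fil i)) (Fil' : Fin s → ℕ → Submodule F' V')
    (hdec' : ∀ i, Antitone (Fil' i)) (l : ℕ)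
    (hV : Module.finrank F V = Module.finrank F' V')
    (h : ∀ i j, Module.finrank F (Fil i j) = Module.finrank F' (Fil' i j)) :
    filSlope F Fil l = filSlope F' Fil' l := by
  simp only [filSlope, filWeight_eq Fil hdec, filWeight_eq Fil' hdec', hV, h]

end Weights

/-! ### Saturated sublattices and their reductions -/

section Lattices

variable (O : Type*) [CommRing O] [IsDomain O] [ValuationRing O]
variable (K : Type*) [Field K] [Algebra O K] [IsFractionRing O K]
variable {V : Type*} [AddCommGroup V] [Module K V] [Module O V] [IsScalarTower O K V]

/-- If `N` and `M/N` are free, a basis of `N` extends to one of `M`, so its reduction is linearly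
independent in `M̄`. -/
theorem finrank_span_redMap (M : Submodule O V) [Module.Finite O M] (N : Submodule O M)
    [Module.Finite O N] [Module.Free O N] [Module.Free O (M ⧸ N)] :
    Module.finrank (IsLocalRing.ResidueField O)
      (Submodule.span (IsLocalRing.ResidueField O) (redMap O M '' (N : Set M)))
      = Module.finrank O N := by
  set bN := Module.Free.chooseBasis O N
  set b := Module.Basis.sumQuot bN (Module.Free.chooseBasis O (M ⧸ N)) with hb
  have hcoord : ∀ (i) (x : M), x ∈ (IsLocalRing.maximalIdeal O • ⊤ : Submodule O M) →
      b.coord i x ∈ IsLocalRing.maximalIdeal O := by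
    intro i x hx
    have h1 := Submodule.mem_map_of_mem (f := b.coord i) hx
    rw [Submodule.map_smul''] at h1
    have h2 := Submodule.smul_mono (le_refl (IsLocalRing.maximalIdeal O))
      (le_top : Submodule.map (b.coord i) ⊤ ≤ ⊤) h1
    simpa using h2
  have hli : LinearIndependent (IsLocalRing.ResidueField O)
      (fun i => redMap O M (bN i : M)) := by
    rw [Fintype.linearIndependent_iff]
    intro g hg i
    choose c hc using fun i => IsLocalRing.residue_surjective (g i)
    have h0 : redMap O M (∑ i, c i • b (Sum.inl i)) = 0 := by
      rw [map_sum, ← hg]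
      refine Finset.sum_congr rfl fun i _ => ?_
      rw [map_smul, ← hc i, hb, Module.Basis.sumQuot_inl,
        ← IsLocalRing.ResidueField.algebraMap_eq, algebraMap_smul]
    have h1 := hcoord (Sum.inl i) _ ((Submodule.Quotient.mk_eq_zero _).1 h0)
    have h2 : b.coord (Sum.inl i) (∑ i, c i • b (Sum.inl i)) = c i := by
      classical
      simp [Finsupp.single_apply]
    rw [h2] at h1
    rw [← hc i]
    exact (IsLocalRing.residue_eq_zero_iff _).2 h1
  have hspan : Submodule.span (IsLocalRing.ResidueField O) (redMap O M '' (N : Set M))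
      = Submodule.span (IsLocalRing.ResidueField O)
          (Set.range fun i => redMap O M (bN i : M)) := by
    apply le_antisymm
    · rw [Submodule.span_le]
      rintro _ ⟨x, hx, rfl⟩
      have h1 : x = ∑ i, bN.repr ⟨x, hx⟩ i • (bN i : M) := by
        have := congrArg (N.subtype) (bN.sum_repr ⟨x, hx⟩)
        simpa only [map_sum, map_smul, Submodule.subtype_apply] using this.symm
      rw [h1, map_sum]
      refine Submodule.sum_mem _ fun i _ => ?_
      rw [map_smul, ← algebraMap_smul (IsLocalRing.ResidueField O) (bN.repr ⟨x, hx⟩ i)]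
      exact Submodule.smul_mem _ _ (Submodule.subset_span ⟨i, rfl⟩)
    · rw [Submodule.span_le]
      rintro _ ⟨i, rfl⟩
      exact Submodule.subset_span ⟨_, (bN i).2, rfl⟩
  rw [hspan, finrank_span_eq_card hli, Module.finrank_eq_card_chooseBasisIndex]

theorem exists_smul_mem_of_mem_span (N : Submodule O V) (x : V)
    (hx : x ∈ Submodule.span K (N : Set V)) : ∃ a : O, a ≠ 0 ∧ a • x ∈ N := by
  induction hx using Submodule.span_induction with
  | mem x hx => exact ⟨1, one_ne_zero, by simpa using hx⟩
  | zero => exact ⟨1, one_ne_zero, by simp⟩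
  | add x y _ _ hx hy =>
    obtain ⟨a, ha, hax⟩ := hx
    obtain ⟨b, hb, hby⟩ := hy
    refine ⟨a * b, mul_ne_zero ha hb, ?_⟩
    rw [smul_add]
    refine N.add_mem ?_ ?_
    · rw [mul_comm, mul_smul]
      exact N.smul_mem _ hax
    · rw [mul_smul]
      exact N.smul_mem _ hby
  | smul k x _ hx =>
    obtain ⟨a, ha, hax⟩ := hx
    obtain ⟨p, q, hq, rfl⟩ := IsFractionRing.div_surjective (A := O) k
    have hq0 : algebraMap O K q ≠ 0 := by
      simpa using nonZeroDivisors.ne_zero hq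
    refine ⟨q * a, mul_ne_zero (nonZeroDivisors.ne_zero hq) ha, ?_⟩
    have : (q * a) • (algebraMap O K p / algebraMap O K q) • x = p • a • x := by
      rw [← algebraMap_smul K (q * a), ← algebraMap_smul K p, ← algebraMap_smul K a, smul_smul,
        smul_smul, map_mul]
      congr 1
      field_simp
    rw [this]
    exact N.smul_mem _ hax

/-- A submodule of `M` with flat quotient is saturated: it is the intersection of `M` with its
`K`-span. -/
theorem comap_span_eq_of_flat (M : Submodule O V) (B : Submodule O M) [Module.Flat O (M ⧸ B)] :
    ((Submodule.span K (B.map M.subtype : Set V)).restrictScalars O).comap M.subtype = B := by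
  apply le_antisymm
  · intro x hx
    obtain ⟨a, ha, y, hy, hyx⟩ := exists_smul_mem_of_mem_span O K (B.map M.subtype) (x : V) hx
    have hax : a • x ∈ B := by
      have : y = a • x := Subtype.ext hyx
      rwa [← this]
    have h0 : a • (Submodule.Quotient.mk x : M ⧸ B) = 0 :=
      (Submodule.Quotient.mk_eq_zero B).2 hax
    exact (Submodule.Quotient.mk_eq_zero B).1 ((smul_eq_zero_iff_right ha).1 h0)
  · intro x hx
    exact Submodule.subset_span ⟨x, hx, rfl⟩

/-- Reduction preserves dimensions: the image of `U ∩ M` in `M̄` has dimension `dim_K U`. -/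
theorem finrank_span_redMap_comap (M : Submodule O V) (hM : IsIntegralModel O K M)
    (U : Submodule K V) :
    Module.finrank (IsLocalRing.ResidueField O)
      (Submodule.span (IsLocalRing.ResidueField O)
        (redMap O M '' (((U.restrictScalars O).comap M.subtype : Submodule O M) : Set M)))
      = Module.finrank K U := by
  obtain ⟨hfin, hfree, hspan⟩ := hM
  set N : Submodule O M := (U.restrictScalars O).comap M.subtype with hN
  -- `M/N` embeds in `V/U`, so it is torsion-free, hence flat, hence free.
  have htf : Module.IsTorsionFree O (M ⧸ N) := by
    rw [Module.isTorsionFree_iff_smul_eq_zero]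
    intro a q h
    obtain ⟨x, rfl⟩ := Submodule.Quotient.mk_surjective N q
    by_cases ha : a = 0
    · exact Or.inl ha
    right
    have h1 : algebraMap O K a • (x : V) ∈ U := by
      rw [algebraMap_smul]
      exact (Submodule.Quotient.mk_eq_zero N).1 h
    have hne : algebraMap O K a ≠ 0 := by simpa using ha
    exact (Submodule.Quotient.mk_eq_zero N).2 ((U.smul_mem_iff hne).1 h1)
  have hflat : Module.Flat O (M ⧸ N) := by
    rwa [Module.Flat.flat_iff_torsion_eq_bot_of_isBezout,
      ← Submodule.isTorsionFree_iff_torsion_eq_bot]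
  have hfreeQ : Module.Free O (M ⧸ N) := Module.free_of_flat_of_isLocalRing
  -- `M → M/N` splits, which makes `N` a quotient, and a direct summand, of `M`.
  obtain ⟨g, hg⟩ := Module.projective_lifting_property N.mkQ LinearMap.id N.mkQ_surjective
  have hmem : ∀ x, x - g (N.mkQ x) ∈ N := fun x => by
    rw [← Submodule.Quotient.mk_eq_zero N, ← Submodule.mkQ_apply, map_sub]
    have := LinearMap.congr_fun hg (N.mkQ x)
    simp only [LinearMap.comp_apply, LinearMap.id_apply] at this
    rw [this, sub_self]
  let r : M →ₗ[O] N := (LinearMap.id - g ∘ₗ N.mkQ).codRestrict N hmem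
  have hr : r ∘ₗ N.subtype = LinearMap.id := by
    refine LinearMap.ext fun x => Subtype.ext ?_
    have hx0 : N.mkQ (x : M) = 0 := (Submodule.Quotient.mk_eq_zero N).2 x.2
    change (x : M) - g (N.mkQ x) = x
    rw [hx0, map_zero, sub_zero]
  have hNfin : Module.Finite O N := Module.Finite.of_surjective r
    fun x => ⟨x, LinearMap.congr_fun hr x⟩
  have hNproj : Module.Projective O N := Module.Projective.of_split _ _ hr
  have hNfree : Module.Free O N := Module.free_of_flat_of_isLocalRing
  rw [finrank_span_redMap]
  -- An `O`-basis of `N` is a `K`-basis of `U`.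
  set bN := Module.Free.chooseBasis O N
  have hli : LinearIndependent K (fun i => ((bN i : M) : V)) := by
    rw [← LinearIndependent.iff_fractionRing O K]
    exact bN.linearIndependent.map' (M.subtype ∘ₗ N.subtype)
      (LinearMap.ker_eq_bot.2 (M.injective_subtype.comp N.injective_subtype))
  have hU : Submodule.span K (Set.range fun i => ((bN i : M) : V)) = U := by
    apply le_antisymm
    · rw [Submodule.span_le]
      rintro _ ⟨i, rfl⟩
      exact (bN i).2
    · intro x hx
      obtain ⟨a, ha, hax⟩ := exists_smul_mem_of_mem_span O K M x (hspan ▸ Submodule.mem_top)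
      have hne : algebraMap O K a ≠ 0 := by simpa using ha
      rw [← Submodule.smul_mem_iff _ hne, algebraMap_smul]
      have haN : (⟨a • x, hax⟩ : M) ∈ N := by
        change a • x ∈ U
        rw [← algebraMap_smul K]
        exact U.smul_mem _ hx
      have h1 : a • x = ∑ i, bN.repr ⟨_, haN⟩ i • ((bN i : M) : V) := by
        have := congrArg (M.subtype ∘ₗ N.subtype) (bN.sum_repr ⟨_, haN⟩)
        simpa only [map_sum, map_smul, LinearMap.comp_apply, Submodule.subtype_apply]
          using this.symm
      rw [h1]
      refine Submodule.sum_mem _ fun i _ => ?_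
      rw [← algebraMap_smul K]
      exact Submodule.smul_mem _ _ (Submodule.subset_span ⟨i, rfl⟩)
  rw [← hU, finrank_span_eq_card hli, Module.finrank_eq_card_chooseBasisIndex]

end Lattices

/-! ### Non-liftability -/

/-- If `(V, Fil_i^•)` is semistable with integral model `M` and `B̄ ⊆ M̄` is a nonzero
subspace with `μ(B̄) > μ(M̄)`, then the sequence `0 → B̄ → M̄ → M̄/B̄ → 0` is not liftable
over `O`: there is no `B ⊆ M` with `M/B` flat over `O`, reducing modulo `𝔪` to the given
sequence, and with `Fil_i^j ∩ B` surjecting onto `Fil̄_i^j ∩ B̄` for all `i, j`. -/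
theorem destabilizing_sequence_not_liftable_over_O
    (O : Type*) [CommRing O] [IsDomain O] [ValuationRing O]
    (K : Type*) [Field K] [Algebra O K] [IsFractionRing O K]
    (V : Type*) [AddCommGroup V] [Module K V] [Module O V] [IsScalarTower O K V]
    [FiniteDimensional K V]
    {s : ℕ} (Fil : Fin s → ℕ → Submodule K V) (l : ℕ)
    (hdec : ∀ i, Antitone (Fil i)) (htop : ∀ i, Fil i 0 = ⊤) (hbot : ∀ i, Fil i l = ⊥)
    (hss : Semistable K Fil l)
    (M : Submodule O V) (hM : IsIntegralModel O K M)
    (Bbar : Submodule (IsLocalRing.ResidueField O) (Mbar O M)) (hB0 : Bbar ≠ ⊥)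
    (hdestab : filSlope (IsLocalRing.ResidueField O) (filBar O K Fil M) l
      < filSlope (IsLocalRing.ResidueField O)
          (inducedFil (IsLocalRing.ResidueField O) (filBar O K Fil M) Bbar) l) :
    ¬ ∃ B : Submodule O M,
        Module.Flat O (M ⧸ B) ∧
        redMap O M '' (B : Set M) = (Bbar : Set (Mbar O M)) ∧
        ∀ i j, redMap O M '' ((filM O K Fil M i j ⊓ B : Submodule O M) : Set M)
          = ((filBar O K Fil M i j ⊓ Bbar :
              Submodule (IsLocalRing.ResidueField O) (Mbar O M)) : Set (Mbar O M)) := by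
  rintro ⟨B, hflat, hBbar, hFilB⟩
  have hfin : Module.Finite O M := hM.1
  have : FiniteDimensional (IsLocalRing.ResidueField O) (Mbar O M) :=
    Module.Finite.of_restrictScalars_finite O _ _
  have hdecBar : ∀ i, Antitone (filBar O K Fil M i) := fun i a b h =>
    Submodule.span_mono (Set.image_mono fun x hx => hdec i h hx)
  set W : Submodule K V := Submodule.span K (B.map M.subtype : Set V) with hW
  have hWB : (W.restrictScalars O).comap M.subtype = B := comap_span_eq_of_flat O K M B
  have hrank := finrank_span_redMap_comap O K M hM
  have hW0 : W ≠ ⊥ := by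
    intro h
    refine hB0 (eq_bot_iff.2 fun y hy => ?_)
    rw [← SetLike.mem_coe, ← hBbar] at hy
    obtain ⟨x, hx, rfl⟩ := hy
    have hxW : (x : V) ∈ W := Submodule.subset_span ⟨x, hx, rfl⟩
    rw [h, Submodule.mem_bot] at hxW
    have hx0 : x = 0 := Subtype.ext hxW
    simp [hx0]
  have hslopeM : filSlope K Fil l
      = filSlope (IsLocalRing.ResidueField O) (filBar O K Fil M) l := by
    refine filSlope_congr _ hdec _ hdecBar l ?_ fun i j => (hrank (Fil i j)).symm
    have h1 : Submodule.span (IsLocalRing.ResidueField O) (redMap O M ''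
        ((((⊤ : Submodule K V).restrictScalars O).comap M.subtype : Submodule O M) : Set M))
          = ⊤ := by
      refine eq_top_iff.2 fun y _ => ?_
      obtain ⟨x, rfl⟩ := Submodule.mkQ_surjective _ y
      exact Submodule.subset_span ⟨x, trivial, rfl⟩
    rw [← finrank_top K V, ← hrank ⊤, h1, finrank_top]
  have hslopeB : filSlope K (inducedFil K Fil W) l
      = filSlope (IsLocalRing.ResidueField O)
          (inducedFil (IsLocalRing.ResidueField O) (filBar O K Fil M) Bbar) l := by
    refine filSlope_congr _ (antitone_inducedFil _ hdec _) _
      (antitone_inducedFil _ hdecBar _) l ?_ fun i j => ?_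
    · rw [← hrank W, hWB, hBbar, Submodule.span_eq]
    · have h2 : ((Fil i j ⊓ W).restrictScalars O).comap M.subtype = filM O K Fil M i j ⊓ B := by
        conv_rhs => rw [← hWB]
        rfl
      rw [finrank_inducedFil, finrank_inducedFil, ← hrank, h2, hFilB, Submodule.span_eq]
  have hle := hss W hW0
  rw [hslopeM, hslopeB] at hle
  exact absurd hdestab (not_lt.2 hle)
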